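/- Let • denote the rooted tree consisting of a single vertex and let 𝒯_* be any fixed rooted tree. For each n ∈ ℕ let 𝒯_{n,1}, …, 𝒯_{n,k_n} be a finite list of rooted trees, and for a rooted tree 𝒯 let M_n(𝒯) denote the rooted tree whose root has as children the roots of one copy each of 𝒯, 𝒯_{n,1}, …, 𝒯_{n,k_n}. Write M_{n,…,1}(·) = M_n ∘ ⋯ ∘ M_1(·). If there is a constant c < 1 such that sup_{x ∈ [0,1]} | x·∏_{j=1}^{k_n} (1 − p[𝒯_{n,j}](x)) | ≤ c for all n ∈ ℕ, then sup_{x ∈ [0,1]} | p[M_{n,…,1}(𝒯_*)](x) − p[M_{n,…,1}(•)](x) | → 0 as n → ∞. -/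

import Mathlib

/-- A rooted tree: a finite tree with a distinguished root vertex, given by the (ordered)
list of subtrees rooted at the children of the root. -/
inductive RTree : Type where
  | node : List RTree → RTree

namespace RTree

mutual
/-- The tree polynomial `p[𝒯] ∈ ℤ[x]`: `p = x` for a single vertex, and
`p[𝒯] = x (1 − ∏ᵢ (1 − p[𝒯ᵢ]))` when the subtrees rooted at the children of the root are
`𝒯₁, …, 𝒯ᵣ`. -/
noncomputable def treePoly : RTree → Polynomial ℤ
  | .node [] => Polynomial.X
  | .node (t :: ts) => Polynomial.X * (1 - prodPoly (t :: ts))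
  termination_by t => sizeOf t

/-- `∏ᵢ (1 − p[𝒯ᵢ])` over a list of trees. -/
noncomputable def prodPoly : List RTree → Polynomial ℤ
  | [] => 1
  | t :: ts => (1 - treePoly t) * prodPoly ts
  termination_by l => sizeOf l
end

mutual
/-- The set of vertex addresses of a rooted tree: a vertex is addressed by the list of
child indices on the path from the root to it (so the root has address `[]`). -/
def vertexFinset : RTree → Finset (List ℕ)
  | .node ts => insert [] (childVerts ts 0)
  termination_by t => sizeOf t

def childVerts : List RTree → ℕ → Finset (List ℕ)
  | [], _ => ∅
  | t :: ts, i => (vertexFinset t).image (List.cons i) ∪ childVerts ts (i + 1)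
  termination_by l _ => sizeOf l
end

mutual
/-- The subtree rooted at a given vertex address, if the address is valid. -/
def subtreeAt : RTree → List ℕ → Option RTree
  | t, [] => some t
  | .node ts, i :: l => subtreeAtAux ts i l
  termination_by t _ => sizeOf t

def subtreeAtAux : List RTree → ℕ → List ℕ → Option RTree
  | [], _, _ => none
  | t :: _, 0, l => subtreeAt t l
  | _ :: ts, i + 1, l => subtreeAtAux ts i l
  termination_by l _ _ => sizeOf l
end

/-- Whether a tree consists of a single vertex (i.e. its root is a leaf). -/
def isLeafTree : RTree → Bool
  | .node [] => true
  | .node (_ :: _) => false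

/-- The set of (addresses of) leaves of a rooted tree: vertices with no children. -/
def leafFinset (t : RTree) : Finset (List ℕ) :=
  (vertexFinset t).filter (fun l => (subtreeAt t l).any isLeafTree = true)

/-- The set of all prefixes of an address: the set of vertices of the path from the root
to the vertex with this address. -/
def prefixFinset (l : List ℕ) : Finset (List ℕ) :=
  (Finset.range (l.length + 1)).image (fun k => l.take k)

end RTree

namespace RTree

/-- `iterM F n 𝒯 = M_n(⋯(M_1(𝒯))⋯)`, where `M_n(𝒯)` is the rooted tree whose root has as
children the roots of one copy each of `𝒯` and of the trees `𝒯_{n,1}, …, 𝒯_{n,k_n}` in the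
list `F n`. -/
def iterM (F : ℕ → List RTree) : ℕ → RTree → RTree
  | 0, t => t
  | n + 1, t => .node (iterM F n t :: F (n + 1))

end RTree

theorem RTree.aeval_prodPoly (x : ℝ) (l : List RTree) :
    Polynomial.aeval x (RTree.prodPoly l)
      = (l.map (fun s => 1 - Polynomial.aeval x (RTree.treePoly s))).prod := by
  induction l with
  | nil => simp [RTree.prodPoly]
  | cons t ts ih => simp [RTree.prodPoly, ih]

theorem RTree.aeval_diff_succ (x : ℝ) (F : ℕ → List RTree) (n : ℕ) (s t : RTree) :
    Polynomial.aeval x (RTree.treePoly (RTree.iterM F (n + 1) s))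
        - Polynomial.aeval x (RTree.treePoly (RTree.iterM F (n + 1) t))
      = (x * ((F (n + 1)).map (fun s => 1 - Polynomial.aeval x (RTree.treePoly s))).prod) *
        (Polynomial.aeval x (RTree.treePoly (RTree.iterM F n s))
          - Polynomial.aeval x (RTree.treePoly (RTree.iterM F n t))) := by
  simp only [RTree.iterM, RTree.treePoly, RTree.prodPoly, map_mul, map_sub, map_one,
    Polynomial.aeval_X, RTree.aeval_prodPoly]
  ring

/-- Let `•` be the single-vertex tree and `𝒯_*` a fixed rooted tree; for
each `n ≥ 1` let `𝒯_{n,1}, …, 𝒯_{n,k_n}` be rooted trees (the list `F n`). If there is a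
constant `c < 1` with `sup_{x ∈ [0,1]} |x ∏_{j=1}^{k_n} (1 − p[𝒯_{n,j}](x))| ≤ c` for all
`n`, then `sup_{x ∈ [0,1]} |p[M_{n,…,1}(𝒯_*)](x) − p[M_{n,…,1}(•)](x)| → 0` as `n → ∞`. -/
theorem stmt10 (Tstar : RTree) (F : ℕ → List RTree) (c : ℝ) (hc : c < 1)
    (hbound : ∀ n : ℕ, 1 ≤ n → ∀ x ∈ Set.Icc (0 : ℝ) 1,
      |x * ((F n).map (fun s => 1 - Polynomial.aeval x (RTree.treePoly s))).prod| ≤ c) :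
    TendstoUniformlyOn
      (fun n x => Polynomial.aeval x (RTree.treePoly (RTree.iterM F n Tstar))
        - Polynomial.aeval x (RTree.treePoly (RTree.iterM F n (RTree.node []))))
      (fun _ => 0) Filter.atTop (Set.Icc (0 : ℝ) 1) := by
  have hc0 : 0 ≤ c := (abs_nonneg _).trans (hbound 1 le_rfl 0 (by simp))
  obtain ⟨B, hB⟩ := (isCompact_Icc (a := (0 : ℝ)) (b := 1)).exists_bound_of_continuousOn
    (f := fun x : ℝ => Polynomial.aeval x (RTree.treePoly Tstar)
        - Polynomial.aeval x (RTree.treePoly (RTree.node [])))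
    (((RTree.treePoly Tstar).continuous_aeval.sub
      (RTree.treePoly (RTree.node [])).continuous_aeval).continuousOn)
  have key : ∀ n : ℕ, ∀ x ∈ Set.Icc (0 : ℝ) 1,
      |Polynomial.aeval x (RTree.treePoly (RTree.iterM F n Tstar))
        - Polynomial.aeval x (RTree.treePoly (RTree.iterM F n (RTree.node [])))| ≤ c ^ n * B := by
    intro n x hx
    induction n with
    | zero => simpa [RTree.iterM] using hB x hx
    | succ n ih =>
      rw [RTree.aeval_diff_succ, abs_mul, pow_succ', mul_assoc]
      exact mul_le_mul (hbound (n + 1) (by omega) x hx) ih (abs_nonneg _) hc0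
  have hlim : Filter.Tendsto (fun n : ℕ => c ^ n * B) Filter.atTop (nhds 0) := by
    simpa using (tendsto_pow_atTop_nhds_zero_of_lt_one hc0 hc).mul_const B
  rw [Metric.tendstoUniformlyOn_iff]
  intro ε hε
  filter_upwards [hlim.eventually (gt_mem_nhds hε)] with n hn x hx
  rw [dist_comm, Real.dist_eq, sub_zero]
  exact (key n x hx).trans_lt hn
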